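/- arXiv:1201.1280 — 2 statements merged into one kernel-verified Lean document; each statement's English description precedes it below -/
import Mathlib

section
/- Let p be a prime, δ an element of a compact subgroup of PGL₂(ℚ_p), and suppose no power of δ is upper triangular. Define k_{pⁿ}(δ) as the minimal positive integer k such that δ^k lies in the compact open subgroup a(pⁿ) K_p a(pⁿ)⁻¹, where a(pⁿ) = diag(1, pⁿ) and K_p = PGL₂(ℤ_p). Then the sequence k_{pⁿ}(δ)/pⁿ takes only finitely many values, and moreover it is eventually constant as n → ∞. -/
/-- `PGL₂(R) = GL₂(R)` modulo its center. -/
abbrev PGL2 (R : Type*) [CommRing R] :=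
  GL (Fin 2) R ⧸ Subgroup.center (GL (Fin 2) R)

/-- The projection `GL₂(R) → PGL₂(R)`. -/
def toPGL2 (R : Type*) [CommRing R] : GL (Fin 2) R →* PGL2 R :=
  QuotientGroup.mk' _

/-- `K_p = PGL₂(ℤ_p)`, the image in `PGL₂(ℚ_p)` of the integral matrices. -/
noncomputable def Kp (p : ℕ) [Fact p.Prime] : Subgroup (PGL2 ℚ_[p]) :=
  ((toPGL2 ℚ_[p]).comp (Matrix.GeneralLinearGroup.map (PadicInt.Coe.ringHom))).range

/-- The element `a(pⁿ) = diag(1, pⁿ)` of `PGL₂(ℚ_p)`. -/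
noncomputable def aPGL (p : ℕ) [Fact p.Prime] (n : ℕ) : PGL2 ℚ_[p] :=
  toPGL2 ℚ_[p] <| Matrix.GeneralLinearGroup.mkOfDetNeZero
    (Matrix.diagonal ![1, (p : ℚ_[p]) ^ n]) (by
      have hp : (p : ℚ_[p]) ≠ 0 := by
        exact_mod_cast (Nat.cast_ne_zero (R := ℚ_[p])).mpr (Fact.out (p := p.Prime)).pos.ne'
      simp [Matrix.det_diagonal, Fin.prod_univ_two, pow_ne_zero, hp])

open Matrix Filter Topology

/-- Two invertible matrices have the same image in `PGL₂` iff they differ by a scalar. -/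
theorem toPGL2_eq_iff {K : Type*} [Field K] (A B : GL (Fin 2) K) :
    toPGL2 K A = toPGL2 K B ↔ ∃ c : K, c ≠ 0 ∧ ∀ i j, B i j = c * A i j := by
  simp only [toPGL2, QuotientGroup.mk'_eq_mk',
    GeneralLinearGroup.mem_center_iff_val_mem_range_scalar]
  constructor
  · rintro ⟨z, ⟨c, hc⟩, rfl⟩
    refine ⟨c, ?_, fun i j => ?_⟩
    · rintro rfl
      exact z.ne_zero (by rw [← hc]; simp)
    · rw [Units.val_mul, ← hc]
      simp [mul_comm]
  · rintro ⟨c, hc, h⟩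
    refine ⟨GeneralLinearGroup.scalar (Fin 2) (Units.mk0 c hc), ⟨c, rfl⟩, ?_⟩
    refine GeneralLinearGroup.ext fun i j => ?_
    rw [h, Units.val_mul, GeneralLinearGroup.coe_scalar]
    simp [mul_comm]

theorem toPGL2_surjective (R : Type*) [CommRing R] : Function.Surjective (toPGL2 R) :=
  QuotientGroup.mk'_surjective _

/-- An element of `PGL₂(ℚ_p)` is integral iff its entries and determinant have the expected size
after rescaling. -/
theorem toPGL2_mem_Kp_iff {p : ℕ} [Fact p.Prime] (M : GL (Fin 2) ℚ_[p]) :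
    toPGL2 ℚ_[p] M ∈ Kp p ↔
      ∃ c : ℚ_[p], c ≠ 0 ∧ ‖M.val.det‖ = ‖c‖ ^ 2 ∧ ∀ i j, ‖M i j‖ ≤ ‖c‖ := by
  constructor
  · rintro ⟨U, hU⟩
    have hUM : toPGL2 ℚ_[p] (GeneralLinearGroup.map PadicInt.Coe.ringHom U) = toPGL2 ℚ_[p] M := hU
    obtain ⟨c, hc, h⟩ := (toPGL2_eq_iff _ _).1 hUM
    have hM : M.val = c • (U.val.map PadicInt.Coe.ringHom) := by
      ext i j
      rw [h]
      rfl
    refine ⟨c, hc, ?_, fun i j => ?_⟩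
    · have hdet : ‖U.val.det‖ = 1 := PadicInt.isUnit_iff.1 ((isUnit_iff_isUnit_det _).1 U.isUnit)
      have hmap : (U.val.map PadicInt.Coe.ringHom).det = (U.val.det : ℚ_[p]) :=
        (PadicInt.Coe.ringHom.map_det U.val).symm
      rw [hM, det_smul, hmap, norm_mul, norm_pow, ← PadicInt.norm_def, hdet]
      simp
    · rw [h, norm_mul]
      exact mul_le_of_le_one_right (norm_nonneg _) (PadicInt.norm_le_one (U i j))
  · rintro ⟨c, hc, hdet, h⟩
    have hc' : 0 < ‖c‖ := norm_pos_iff.2 hc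
    have hle : ∀ i j, ‖c⁻¹ * M i j‖ ≤ 1 := fun i j => by
      rw [norm_mul, norm_inv, inv_mul_le_one₀ hc']
      exact h i j
    let X : Matrix (Fin 2) (Fin 2) ℤ_[p] := Matrix.of fun i j => ⟨c⁻¹ * M i j, hle i j⟩
    have hX : X.map PadicInt.Coe.ringHom = c⁻¹ • M.val := by
      ext i j
      rfl
    have hXdet : (X.det : ℚ_[p]) = (c⁻¹ • M.val).det := by
      rw [← hX]
      exact PadicInt.Coe.ringHom.map_det X
    have hunit : IsUnit X.det := by
      rw [PadicInt.isUnit_iff, PadicInt.norm_def, hXdet, det_smul, norm_mul, hdet]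
      simp [hc]
    suffices hXM : toPGL2 ℚ_[p] (GeneralLinearGroup.map PadicInt.Coe.ringHom
        (GeneralLinearGroup.mk'' X hunit)) = toPGL2 ℚ_[p] M from ⟨_, hXM⟩
    refine (toPGL2_eq_iff _ _).2 ⟨c, hc, fun i j => ?_⟩
    change M i j = c * (c⁻¹ * M i j)
    rw [mul_inv_cancel_left₀ hc]

/-- Membership in `a(pⁿ) K_p a(pⁿ)⁻¹` in terms of matrix entries. -/
theorem conj_mem_Kp_iff {p : ℕ} [Fact p.Prime] (n : ℕ) (M : GL (Fin 2) ℚ_[p]) :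
    (aPGL p n)⁻¹ * toPGL2 ℚ_[p] M * aPGL p n ∈ Kp p ↔
      ∃ c : ℚ_[p], c ≠ 0 ∧ ‖M.val.det‖ = ‖c‖ ^ 2 ∧ ‖M 0 0‖ ≤ ‖c‖ ∧ ‖M 0 1‖ ≤ p ^ n * ‖c‖ ∧
        p ^ n * ‖M 1 0‖ ≤ ‖c‖ ∧ ‖M 1 1‖ ≤ ‖c‖ := by
  have hp : (p : ℚ_[p]) ≠ 0 := by exact_mod_cast (Fact.out (p := p.Prime)).ne_zero
  have hpn : (0 : ℝ) < (p : ℝ) ^ n := by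
    have := (Fact.out (p := p.Prime)).pos
    positivity
  have hD : (Matrix.diagonal ![1, (p : ℚ_[p]) ^ n]).det ≠ 0 := by
    simp [Matrix.det_diagonal, Fin.prod_univ_two, hp]
  set A := GeneralLinearGroup.mkOfDetNeZero (Matrix.diagonal ![1, (p : ℚ_[p]) ^ n]) hD with hA
  have hAval : A.val = !![1, 0; 0, (p : ℚ_[p]) ^ n] := by
    rw [hA]
    ext i j
    fin_cases i <;> fin_cases j <;> rfl
  have hAinv : (A⁻¹).val = !![1, 0; 0, ((p : ℚ_[p]) ^ n)⁻¹] := by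
    rw [GeneralLinearGroup.coe_inv, hAval]
    refine inv_eq_right_inv ?_
    ext i j
    fin_cases i <;> fin_cases j <;> simp [Matrix.mul_apply, hp]
  have hconj : (A⁻¹ * M * A).val =
      !![M 0 0, M 0 1 * (p : ℚ_[p]) ^ n; ((p : ℚ_[p]) ^ n)⁻¹ * M 1 0, M 1 1] := by
    rw [GeneralLinearGroup.coe_mul, GeneralLinearGroup.coe_mul, hAval, hAinv]
    ext i j
    fin_cases i <;> fin_cases j <;>
      simp [Matrix.mul_apply, Matrix.vecMul, dotProduct, Fin.sum_univ_two, hp, mul_comm]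
  have hdet : (A⁻¹ * M * A).val.det = M.val.det := by
    rw [hconj, det_fin_two_of, det_fin_two]
    field_simp
  have hmk : (aPGL p n)⁻¹ * toPGL2 ℚ_[p] M * aPGL p n = toPGL2 ℚ_[p] (A⁻¹ * M * A) := by
    rw [map_mul, map_mul, map_inv]
    rfl
  rw [hmk, toPGL2_mem_Kp_iff, hdet, hconj]
  refine exists_congr fun c => and_congr_right fun _ => and_congr_right fun _ => ?_
  simp only [Fin.forall_fin_two]
  simp [inv_mul_le_iff₀ hpn, mul_comm, and_assoc]

/-- Powers of an integral matrix congruent to `1` modulo `p²`. -/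
theorem pow_congr_one {R : Type*} [CommRing R] {q : R} {M : Matrix (Fin 2) (Fin 2) R}
    (hM : ∃ Y, M = 1 + q • Y) (j : ℕ) :
    (∃ Y, M ^ j = 1 + q • Y) ∧ ∃ s, (M ^ j) 1 0 = M 1 0 * (j + q * s) := by
  induction j with
  | zero => exact ⟨⟨0, by simp⟩, 0, by simp⟩
  | succ j ih =>
    obtain ⟨⟨Y, hY⟩, s, hs⟩ := ih
    obtain ⟨X, hX⟩ := hM
    refine ⟨⟨X + Y + q • (Y * X), ?_⟩, s + X 0 0 * (j + q * s) + Y 1 1, ?_⟩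
    · rw [pow_succ, hY, hX]
      simp only [add_mul, mul_add, mul_one, one_mul, smul_mul_smul_comm, smul_add, smul_smul]
      abel
    · have h00 : M 0 0 = 1 + q * X 0 0 := by rw [hX]; simp
      have h11 : (M ^ j) 1 1 = 1 + q * Y 1 1 := by rw [hY]; simp
      rw [pow_succ, Matrix.mul_apply, Fin.sum_univ_two, hs, h00, h11]
      push_cast
      ring

/-- The lower left entry of the powers of a matrix congruent to `1` modulo `p²`. -/
theorem norm_pow_lower_left {p : ℕ} [Fact p.Prime] (j : ℕ) {M : Matrix (Fin 2) (Fin 2) ℤ_[p]}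
    (hM : ∃ Y, M = 1 + (p : ℤ_[p]) ^ 2 • Y) :
    ‖(M ^ j) 1 0‖ = ‖M 1 0‖ * ‖(j : ℤ_[p])‖ := by
  have hp := Fact.out (p := p.Prime)
  have hp1 : (1 : ℝ) < p := by exact_mod_cast hp.one_lt
  have key : ∀ (k : ℕ) (s : ℤ_[p]), (p : ℝ)⁻¹ ≤ ‖(k : ℤ_[p])‖ →
      ‖(k : ℤ_[p]) + (p : ℤ_[p]) ^ 2 * s‖ = ‖(k : ℤ_[p])‖ := by
    intro k s hk
    have hlt : ‖(p : ℤ_[p]) ^ 2 * s‖ < ‖(k : ℤ_[p])‖ := by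
      refine lt_of_lt_of_le ?_ hk
      rw [norm_mul, norm_pow, PadicInt.norm_p]
      have h1 : ((p : ℝ)⁻¹) ^ 2 * ‖s‖ ≤ ((p : ℝ)⁻¹) ^ 2 :=
        mul_le_of_le_one_right (by positivity) (PadicInt.norm_le_one s)
      have h2 : ((p : ℝ)⁻¹) ^ 2 < (p : ℝ)⁻¹ :=
        pow_lt_self_of_lt_one₀ (by positivity) (inv_lt_one_of_one_lt₀ hp1) one_lt_two
      exact h1.trans_lt h2
    rw [PadicInt.norm_add_eq_max_of_ne hlt.ne', max_eq_left hlt.le]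
  have step : ∀ (k : ℕ) {N : Matrix (Fin 2) (Fin 2) ℤ_[p]},
      (∃ Y, N = 1 + (p : ℤ_[p]) ^ 2 • Y) → (p : ℝ)⁻¹ ≤ ‖(k : ℤ_[p])‖ →
      ‖(N ^ k) 1 0‖ = ‖N 1 0‖ * ‖(k : ℤ_[p])‖ := by
    intro k N hN hk
    obtain ⟨s, hs⟩ := (pow_congr_one hN k).2
    rw [hs, norm_mul, key k s hk]
  rcases eq_or_ne j 0 with rfl | hj
  · simp
  obtain ⟨e, q, hq, rfl⟩ := Nat.exists_eq_pow_mul_and_not_dvd hj p hp.ne_one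
  clear hj
  induction e generalizing M with
  | zero =>
    refine step _ hM ?_
    have : ‖(q : ℤ_[p])‖ = 1 := by
      refine le_antisymm (PadicInt.norm_le_one _) (not_lt.1 fun h => hq ?_)
      have := (PadicInt.norm_int_lt_one_iff_dvd (p := p) (q : ℤ)).1 (by exact_mod_cast h)
      exact_mod_cast this
    simpa [this] using (inv_lt_one_of_one_lt₀ hp1).le
  | succ e ih =>
    have hmul : p ^ (e + 1) * q = p * (p ^ e * q) := by ring
    rw [hmul, pow_mul, ih (pow_congr_one hM p).1, step p hM (by rw [PadicInt.norm_p])]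
    push_cast
    rw [norm_mul (p : ℤ_[p])]
    ring

/-- The exponents of the powers of `g` lying in a subgroup are the multiples of the least one. -/
theorem pow_mem_iff_sInf_dvd {G : Type*} [Group G] (H : Subgroup G) (g : G) {m : ℕ} (hm : 0 < m)
    (hmH : g ^ m ∈ H) :
    0 < sInf {k : ℕ | 0 < k ∧ g ^ k ∈ H} ∧
      ∀ k, g ^ k ∈ H ↔ sInf {k : ℕ | 0 < k ∧ g ^ k ∈ H} ∣ k := by
  have hmem := Nat.sInf_mem (s := {k : ℕ | 0 < k ∧ g ^ k ∈ H}) ⟨m, hm, hmH⟩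
  set d := sInf {k : ℕ | 0 < k ∧ g ^ k ∈ H} with hd
  refine ⟨hmem.1, fun k => ⟨fun hk => ?_, ?_⟩⟩
  · have hr : g ^ (k % d) ∈ H := by
      rw [← Nat.div_add_mod k d, pow_add, pow_mul] at hk
      exact (H.mul_mem_cancel_left (H.pow_mem hmem.2 _)).1 hk
    by_contra hdvd
    have hpos : 0 < k % d := Nat.pos_of_ne_zero fun h => hdvd (Nat.dvd_of_mod_eq_zero h)
    exact (Nat.mod_lt k hmem.1).not_ge (Nat.sInf_le ⟨hpos, hr⟩)
  · rintro ⟨l, rfl⟩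
    rw [pow_mul]
    exact H.pow_mem hmem.2 l

/-- A divisibility chain `k` such that `k n ∣ m j ↔ p ^ (n - v) ∣ j` satisfies
`k (n + 1) = p * k n` eventually. -/
theorem eventually_const_div_pow {p m v B : ℕ} (hp : p.Prime) (hm : 0 < m) {k : ℕ → ℕ}
    (hk : ∀ n ≥ v, ∀ j, k n ∣ m * j ↔ p ^ (n - v) ∣ j) (hdvd : ∀ n ≥ B, k n ∣ k (n + 1)) :
    ∃ N, ∀ n ≥ N, (k n : ℚ) / (p : ℚ) ^ n = (k N : ℚ) / (p : ℚ) ^ N := by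
  have ht : ∀ n, ∃ t, v ≤ n → m * p ^ (n - v) = k n * t := fun n => by
    by_cases hn : v ≤ n
    · obtain ⟨t, ht⟩ := (hk n hn (p ^ (n - v))).2 dvd_rfl
      exact ⟨t, fun _ => ht⟩
    · exact ⟨0, fun h => absurd h hn⟩
  choose t ht using ht
  have hpos : ∀ n ≥ v, 0 < k n * t n := fun n hn => by
    rw [← ht n hn]
    exact Nat.mul_pos hm (pow_pos hp.pos _)
  have hcop : ∀ n > v, ¬ p ∣ t n := by
    rintro n hn ⟨s, hs⟩
    obtain ⟨e, rfl⟩ := Nat.exists_eq_add_of_lt hn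
    have he : v + e + 1 - v = e + 1 := by omega
    have h1 := ht (v + e + 1) hn.le
    rw [hs, he] at h1
    have h2 : m * p ^ e = k (v + e + 1) * s := by
      apply Nat.eq_of_mul_eq_mul_left hp.pos
      linear_combination h1
    have h3 := (hk (v + e + 1) hn.le (p ^ e)).1 ⟨s, h2⟩
    rw [he, Nat.pow_dvd_pow_iff_le_right hp.one_lt] at h3
    omega
  have hanti : ∀ n ≥ max (v + 1) B, t (n + 1) ≤ t n := by
    intro n hn
    have hnv : v + 1 ≤ n := (le_max_left _ _).trans hn
    obtain ⟨q, hq⟩ := hdvd n ((le_max_right _ _).trans hn)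
    have h1 := ht n (by omega)
    have h2 := ht (n + 1) (by omega)
    rw [Nat.sub_add_comm (by omega : v ≤ n), pow_succ, ← mul_assoc, h1, hq] at h2
    have hkt := hpos n (by omega)
    have h3 : t n * p = q * t (n + 1) := by
      apply Nat.eq_of_mul_eq_mul_left (Nat.pos_of_mul_pos_right hkt)
      linear_combination h2
    have h4 : t (n + 1) ∣ t n * p := ⟨q, by rw [h3, mul_comm]⟩
    have h5 : Nat.Coprime (t (n + 1)) p :=
      ((Nat.Prime.coprime_iff_not_dvd hp).2 (hcop _ (by omega))).symm
    exact Nat.le_of_dvd (Nat.pos_of_mul_pos_left hkt) (h5.dvd_of_dvd_mul_right h4)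
  have hanti' : Antitone fun i => t (max (v + 1) B + i) :=
    antitone_nat_of_succ_le fun i => hanti (max (v + 1) B + i) (Nat.le_add_right _ _)
  obtain ⟨N, hN⟩ := WellFoundedGT.monotone_chain_condition
    (α := ℕᵒᵈ) ⟨fun i => t (max (v + 1) B + i), hanti'⟩
  have hval : ∀ n ≥ v, (k n : ℚ) / (p : ℚ) ^ n = m / ((p : ℚ) ^ v * t n) := by
    intro n hn
    have h := ht n hn
    have htn : (t n : ℚ) ≠ 0 := by exact_mod_cast (Nat.pos_of_mul_pos_left (hpos n hn)).ne'
    have hp0 : (p : ℚ) ≠ 0 := by exact_mod_cast hp.ne_zero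
    rw [div_eq_div_iff (by positivity) (by positivity)]
    obtain ⟨e, rfl⟩ := Nat.exists_eq_add_of_le hn
    rw [Nat.add_sub_cancel_left] at h
    have h' : (m : ℚ) * (p : ℚ) ^ e = k (v + e) * t (v + e) := by exact_mod_cast h
    rw [pow_add]
    linear_combination -(p : ℚ) ^ v * h'
  refine ⟨max (v + 1) B + N, fun n hn => ?_⟩
  obtain ⟨e, rfl⟩ := Nat.exists_eq_add_of_le hn
  have h : t (max (v + 1) B + N) = t (max (v + 1) B + (N + e)) := hN (N + e) (by omega)
  rw [hval _ (by omega), hval _ (by omega), add_assoc, ← h]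

/-- Any element of a compact subgroup of `G` has positive powers in each neighbourhood of `1`. -/
theorem exists_pow_mem_of_mem_nhds_one {G : Type*} [Group G] [TopologicalSpace G]
    [IsTopologicalGroup G] {K : Subgroup G} (hK : IsCompact (K : Set G)) {g : G} (hg : g ∈ K)
    {U : Set G} (hU : U ∈ 𝓝 1) : ∃ m : ℕ, 0 < m ∧ g ^ m ∈ U := by
  have : CompactSpace K := isCompact_iff_compactSpace.1 hK
  have h := mapClusterPt_one_atTop_pow (⟨g, hg⟩ : K)
  have hU' : ((↑) : K → G) ⁻¹' U ∈ 𝓝 (1 : K) := continuous_subtype_val.continuousAt hU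
  obtain ⟨m, hm, hmU⟩ := ((h.frequently hU').and_eventually (eventually_gt_atTop 0)).exists
  exact ⟨m, hmU, hm⟩

/-- The upper right entry is bounded, relative to the determinant, on compact subsets of
`PGL₂`. -/
theorem exists_bound_upper_right {K : Type*} [NormedField K] {S : Set (PGL2 K)}
    (hS : IsCompact S) :
    ∃ C : ℝ, ∀ M : GL (Fin 2) K, toPGL2 K M ∈ S → ‖M 0 1‖ ^ 2 ≤ C * ‖M.val.det‖ := by
  let φ : GL (Fin 2) K → ℝ := fun M => ‖M 0 1‖ ^ 2 / ‖M.val.det‖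
  have hdet : ∀ M : GL (Fin 2) K, ‖M.val.det‖ ≠ 0 := fun M =>
    norm_ne_zero_iff.2 (GeneralLinearGroup.det_ne_zero M)
  have hφ : Continuous φ := by
    refine Continuous.div₀ ?_ ?_ hdet
    · exact ((Units.continuous_val.matrix_elem 0 1).norm).pow 2
    · exact Units.continuous_val.matrix_det.norm
  have hinv : ∀ A B : GL (Fin 2) K, toPGL2 K A = toPGL2 K B → φ A = φ B := by
    intro A B h
    obtain ⟨c, hc, hB⟩ := (toPGL2_eq_iff A B).1 h
    have hB' : B.val = c • A.val := by
      ext i j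
      exact hB i j
    have hc' : ‖c‖ ≠ 0 := norm_ne_zero_iff.2 hc
    have := hdet A
    simp only [φ, hB, hB', det_smul, norm_mul, norm_pow, Fintype.card_fin]
    field_simp
  let ψ : PGL2 K → ℝ := Quotient.lift φ fun A B h => hinv A B (Quotient.sound h)
  have hψ : Continuous ψ := hφ.quotient_lift _
  obtain ⟨C, hC⟩ := (hS.image hψ).bddAbove
  refine ⟨C, fun M hM => ?_⟩
  have hle : φ M ≤ C := hC ⟨_, hM, rfl⟩
  exact (div_le_iff₀ ((norm_nonneg _).lt_of_ne' (hdet M))).1 hle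

/-- The classes of the matrices congruent to `1` modulo `p²` form a neighbourhood of `1`. -/
theorem image_congr_one_mem_nhds (p : ℕ) [Fact p.Prime] :
    toPGL2 ℚ_[p] '' {M | ∃ Y : Matrix (Fin 2) (Fin 2) ℤ_[p],
      M.val = (1 + (p : ℤ_[p]) ^ 2 • Y).map PadicInt.Coe.ringHom} ∈ 𝓝 1 := by
  have hp : (p : ℚ_[p]) ≠ 0 := by exact_mod_cast (Fact.out (p := p.Prime)).ne_zero
  have hopen : IsOpenMap (toPGL2 ℚ_[p]) := QuotientGroup.isOpenMap_coe
  rw [← map_one (toPGL2 ℚ_[p])]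
  refine hopen.image_mem_nhds ?_
  have hV : ∀ᶠ M in 𝓝 (1 : GL (Fin 2) ℚ_[p]), ∀ i j,
      ‖(M.val - 1) i j‖ < ‖(p : ℚ_[p]) ^ 2‖ := by
    refine eventually_all.2 fun i => eventually_all.2 fun j => ?_
    have hcont : Continuous fun M : GL (Fin 2) ℚ_[p] => ‖(M.val - 1) i j‖ :=
      ((Units.continuous_val.sub continuous_const).matrix_elem i j).norm
    refine hcont.continuousAt.eventually_lt continuousAt_const ?_
    simpa only [Units.val_one, sub_self, Matrix.zero_apply, norm_zero] using
      norm_pos_iff.2 (pow_ne_zero 2 hp)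
  filter_upwards [hV] with M hM
  have hle : ∀ i j, ‖((p : ℚ_[p]) ^ 2)⁻¹ * (M.val - 1) i j‖ ≤ 1 := fun i j => by
    rw [norm_mul, norm_inv, inv_mul_le_one₀ (norm_pos_iff.2 (pow_ne_zero 2 hp))]
    exact (hM i j).le
  refine ⟨Matrix.of fun i j => ⟨_, hle i j⟩, ?_⟩
  have hmap : ∀ Y : Matrix (Fin 2) (Fin 2) ℤ_[p],
      (1 + (p : ℤ_[p]) ^ 2 • Y).map PadicInt.Coe.ringHom =
        1 + (p : ℚ_[p]) ^ 2 • Y.map PadicInt.Coe.ringHom := by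
    intro Y
    ext i j
    by_cases hij : i = j <;> simp [hij]
  rw [hmap, ← sub_eq_iff_eq_add']
  ext i j
  change _ = (p : ℚ_[p]) ^ 2 * (((p : ℚ_[p]) ^ 2)⁻¹ * (M.val - 1) i j)
  rw [mul_inv_cancel_left₀ (pow_ne_zero 2 hp)]

/-- The image in `PGL₂(ℚ_p)` of a matrix congruent to `1` modulo `p²`, raised to the `j`-th power,
lies in `a(pⁿ) K_p a(pⁿ)⁻¹` iff `pⁿ` divides `j` times the lower left entry. -/
theorem conj_pow_mem_Kp_iff {p : ℕ} [Fact p.Prime] {h : GL (Fin 2) ℚ_[p]}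
    {X : Matrix (Fin 2) (Fin 2) ℤ_[p]} (hX : ∃ Y, X = 1 + (p : ℤ_[p]) ^ 2 • Y)
    (hh : h.val = X.map PadicInt.Coe.ringHom) (n j : ℕ) :
    (aPGL p n)⁻¹ * toPGL2 ℚ_[p] h ^ j * aPGL p n ∈ Kp p ↔
      (p : ℝ) ^ n * (‖X 1 0‖ * ‖(j : ℤ_[p])‖) ≤ 1 := by
  have hp1 : (1 : ℝ) ≤ (p : ℝ) ^ n :=
    one_le_pow₀ (by exact_mod_cast (Fact.out (p := p.Prime)).one_lt.le)
  have hpow : (h ^ j).val = (X ^ j).map PadicInt.Coe.ringHom := by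
    rw [Units.val_pow_eq_pow_val, hh]
    exact (map_pow (PadicInt.Coe.ringHom.mapMatrix) X j).symm
  have hentry : ∀ a b, ‖(h ^ j) a b‖ = ‖(X ^ j) a b‖ := fun a b => by
    rw [hpow]
    rfl
  have hdet : ‖(h ^ j).val.det‖ = 1 := by
    have hmap : ((X ^ j).map PadicInt.Coe.ringHom).det = ((X ^ j).det : ℚ_[p]) :=
      (PadicInt.Coe.ringHom.map_det (X ^ j)).symm
    obtain ⟨Y, hY⟩ := (pow_congr_one hX j).1
    rw [hpow, hmap, ← PadicInt.norm_def]
    have hdvd : (p : ℤ_[p]) ∣ (X ^ j).det - 1 := by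
      rw [hY, det_fin_two]
      refine ⟨p * (Y 0 0 + Y 1 1 + (p : ℤ_[p]) ^ 2 * (Y 0 0 * Y 1 1 - Y 0 1 * Y 1 0)), ?_⟩
      simp
      ring
    have hlt : ‖(X ^ j).det - 1‖ < ‖(1 : ℤ_[p])‖ := by
      rw [norm_one]
      exact (PadicInt.norm_lt_one_iff_dvd _).2 hdvd
    rw [← sub_add_cancel (X ^ j).det 1, PadicInt.norm_add_eq_max_of_ne hlt.ne,
      max_eq_right hlt.le, norm_one]
  rw [← map_pow, conj_mem_Kp_iff, hdet, hentry, hentry, hentry, hentry,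
    ← norm_pow_lower_left j hX]
  constructor
  · rintro ⟨c, -, hc, -, -, hle, -⟩
    have : ‖c‖ = 1 := (pow_eq_one_iff_of_nonneg (norm_nonneg c) two_ne_zero).1 hc.symm
    rwa [this] at hle
  · intro hle
    refine ⟨1, one_ne_zero, by simp, ?_, ?_, by simpa using hle, ?_⟩ <;>
      simp only [norm_one, mul_one]
    · exact PadicInt.norm_le_one _
    · exact (PadicInt.norm_le_one _).trans hp1
    · exact PadicInt.norm_le_one _

/-- for `δ` in a compact subgroup of `PGL₂(ℚ_p)` no power of which is upper
triangular, the sequence `k_{pⁿ}(δ)/pⁿ` (where `k_{pⁿ}(δ)` is the minimal positive `k` with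
`δ^k ∈ a(pⁿ) K_p a(pⁿ)⁻¹`) takes only finitely many values and is eventually constant. -/
theorem stmt_5 (p : ℕ) [Fact p.Prime] (δ : PGL2 ℚ_[p])
    (hcompact : ∃ K : Subgroup (PGL2 ℚ_[p]), IsCompact (K : Set (PGL2 ℚ_[p])) ∧ δ ∈ K)
    (hnotUT : ∀ k : ℕ, 0 < k → ¬ ∃ M : GL (Fin 2) ℚ_[p],
      (M : Matrix (Fin 2) (Fin 2) ℚ_[p]) 1 0 = 0 ∧ toPGL2 ℚ_[p] M = δ ^ k)
    (f : ℕ → ℚ)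
    (hf : ∀ n : ℕ,
      f n = ((sInf {k : ℕ | 0 < k ∧ (aPGL p n)⁻¹ * δ ^ k * aPGL p n ∈ Kp p} : ℕ) : ℚ) / (p : ℚ) ^ n) :
    (Set.range f).Finite ∧ ∃ N : ℕ, ∀ m : ℕ, N ≤ m → f m = f N := by
  obtain ⟨K, hK, hδ⟩ := hcompact
  have hp := Fact.out (p := p.Prime)
  have hp1 : (1 : ℝ) < p := by exact_mod_cast hp.one_lt
  obtain ⟨m, hm, h, ⟨Y, hY⟩, hh⟩ :=
    exists_pow_mem_of_mem_nhds_one hK hδ (image_congr_one_mem_nhds p)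
  set X : Matrix (Fin 2) (Fin 2) ℤ_[p] := 1 + (p : ℤ_[p]) ^ 2 • Y with hX
  have hX0 : X 1 0 ≠ 0 := fun h0 => hnotUT m hm ⟨h, by
    rw [hY, Matrix.map_apply, h0, map_zero], hh⟩
  let H : ℕ → Subgroup (PGL2 ℚ_[p]) := fun n =>
    (Kp p).comap (MulAut.conj (aPGL p n)⁻¹).toMonoidHom
  have hH : ∀ n x, x ∈ H n ↔ (aPGL p n)⁻¹ * x * aPGL p n ∈ Kp p := fun n x => by
    simp [H, Subgroup.mem_comap]
  have hmul : ∀ n ≥ (X 1 0).valuation, ∀ j,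
      δ ^ (m * j) ∈ H n ↔ p ^ (n - (X 1 0).valuation) ∣ j := by
    intro n hn j
    obtain ⟨e, he⟩ := Nat.exists_eq_add_of_le hn
    have hdvd := PadicInt.norm_int_le_pow_iff_dvd (p := p) (k := j) (n := e)
    rw [pow_mul, ← hh, hH, conj_pow_mem_Kp_iff ⟨Y, hX⟩ hY,
      PadicInt.norm_eq_zpow_neg_valuation hX0, he, Nat.add_sub_cancel_left,
      ← Int.natCast_dvd_natCast, Nat.cast_pow, ← hdvd, Int.cast_natCast, _root_.zpow_neg,
      _root_.zpow_neg, zpow_natCast, zpow_natCast, pow_add]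
    have hpos : ∀ i : ℕ, (0 : ℝ) < (p : ℝ) ^ i := fun i => pow_pos (zero_lt_one.trans hp1) i
    have hiff : ∀ a b x : ℝ, 0 < a → 0 < b → (a * b * (a⁻¹ * x) ≤ 1 ↔ x ≤ b⁻¹) := by
      intro a b x ha hb
      rw [mul_mul_mul_comm, mul_inv_cancel₀ ha.ne', one_mul, inv_eq_one_div, le_div_iff₀' hb]
    exact hiff _ _ _ (hpos _) (hpos _)
  have hmem : ∀ n, ∃ M, 0 < M ∧ δ ^ M ∈ H n := by
    intro n
    refine ⟨m * p ^ n, Nat.mul_pos hm (pow_pos hp.pos _), ?_⟩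
    rw [pow_mul, ← hh, hH, conj_pow_mem_Kp_iff ⟨Y, hX⟩ hY, Nat.cast_pow, norm_pow,
      PadicInt.norm_p, mul_left_comm, ← mul_pow, mul_inv_cancel₀ (by positivity), one_pow, mul_one]
    exact PadicInt.norm_le_one _
  have hbound : ∃ B, ∀ n ≥ B, ∀ k, δ ^ k ∈ H (n + 1) → δ ^ k ∈ H n := by
    obtain ⟨C, hC⟩ := exists_bound_upper_right hK
    obtain ⟨B, hB⟩ := pow_unbounded_of_one_lt C hp1
    refine ⟨B, fun n hn k hk => ?_⟩
    obtain ⟨M, hM⟩ := toPGL2_surjective ℚ_[p] (δ ^ k)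
    rw [hH, ← hM, conj_mem_Kp_iff] at hk ⊢
    obtain ⟨c, hc, hdet, h00, -, h10, h11⟩ := hk
    have hpn : (1 : ℝ) ≤ (p : ℝ) ^ n := one_le_pow₀ hp1.le
    refine ⟨c, hc, hdet, h00, ?_, ?_, h11⟩
    · have h01 := hC M (hM ▸ K.pow_mem hδ k)
      have hCn : C ≤ ((p : ℝ) ^ n) ^ 2 :=
        (hB.le.trans (pow_le_pow_right₀ hp1.le hn)).trans (le_self_pow₀ hpn two_ne_zero)
      refine le_of_sq_le_sq ?_ (by positivity)
      rw [mul_pow, ← hdet]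
      exact h01.trans (mul_le_mul_of_nonneg_right hCn (norm_nonneg _))
    · refine le_trans (mul_le_mul_of_nonneg_right ?_ (norm_nonneg _)) h10
      exact pow_le_pow_right₀ hp1.le n.le_succ
  obtain ⟨B, hB⟩ := hbound
  let k : ℕ → ℕ := fun n => sInf {k : ℕ | 0 < k ∧ δ ^ k ∈ H n}
  have hkdvd : ∀ n l, δ ^ l ∈ H n ↔ k n ∣ l := fun n => by
    obtain ⟨M, hM, hMH⟩ := hmem n
    exact (pow_mem_iff_sInf_dvd (H n) δ hM hMH).2
  have hfk : ∀ n, f n = (k n : ℚ) / (p : ℚ) ^ n := fun n => by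
    simp only [hf, k, hH]
  obtain ⟨N, hN⟩ := eventually_const_div_pow hp hm (k := k)
    (fun n hn j => (hkdvd n _).symm.trans (hmul n hn j))
    (fun n hn => (hkdvd n _).1 (hB n hn _ ((hkdvd _ _).2 dvd_rfl)))
  have hconst : ∀ n ≥ N, f n = f N := fun n hn => by rw [hfk, hfk, hN n hn]
  refine ⟨((Set.finite_Iic N).image f).subset ?_, N, hconst⟩
  rintro _ ⟨n, rfl⟩
  rcases le_total n N with hn | hn
  · exact ⟨n, hn, rfl⟩
  · exact ⟨N, le_refl N, (hconst n hn).symm⟩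
end

section
/- For any real number x, the orbit of x under PGL₂(ℤ) acting by Möbius transformations equals the set of real numbers whose continued fraction expansion has the same tail as that of x. That is, PGL₂(ℤ)·x = {y ∈ ℝ : ∃ m, n > 0 such that a_{n+i}(y) = a_{m+i}(x) for all i ≥ 0}, where a_k denotes the k-th continued fraction digit. -/
/-- The Gauss map `y ↦ {1/y}`. -/
noncomputable def gaussMap : ℝ → ℝ := fun y => Int.fract y⁻¹

/-- The `n`-th continued fraction digit (partial quotient) of `x`, for `n ≥ 1`:
`a_n(x) = ⌊ 1 / S^[n-1]({x}) ⌋`. -/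
noncomputable def cfDigit (n : ℕ) (x : ℝ) : ℤ :=
  ⌊(gaussMap^[n - 1] (Int.fract x))⁻¹⌋

/-- `y` is the image of `x` under an integral Möbius transformation of determinant `±1`
that is finite at `x`. -/
def UnimodularRel (x y : ℝ) : Prop :=
  ∃ a b c d : ℤ, (a * d - b * c = 1 ∨ a * d - b * c = -1) ∧ (c * x + d : ℝ) ≠ 0 ∧
    y * (c * x + d) = a * x + b

theorem UnimodularRel.refl (x : ℝ) : UnimodularRel x x :=
  ⟨1, 0, 0, 1, by norm_num, by norm_num, by push_cast; ring⟩

theorem UnimodularRel.symm {x y : ℝ} (h : UnimodularRel x y) : UnimodularRel y x := by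
  obtain ⟨a, b, c, d, hdet, hne, hy⟩ := h
  refine ⟨d, -b, -c, a, by rcases hdet with h | h <;> [left; right] <;> linarith, ?_, ?_⟩
  · intro h0
    push_cast at h0
    have h1 : ((a * d - b * c : ℤ) : ℝ) = 0 := by
      push_cast
      linear_combination (c * x + d) * h0 + c * hy
    rcases hdet with h | h <;> rw [h] at h1 <;> norm_num at h1
  · push_cast
    linear_combination -hy

theorem UnimodularRel.trans {x y z : ℝ} (h₁ : UnimodularRel x y) (h₂ : UnimodularRel y z) :
    UnimodularRel x z := by
  obtain ⟨a, b, c, d, hdet, hne, hy⟩ := h₁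
  obtain ⟨a', b', c', d', hdet', hne', hz⟩ := h₂
  have key : ((c' * a + d' * c : ℤ) * x + (c' * b + d' * d : ℤ) : ℝ) =
      (c' * y + d') * (c * x + d) := by
    push_cast
    linear_combination -c' * hy
  refine ⟨a' * a + b' * c, a' * b + b' * d, c' * a + d' * c, c' * b + d' * d, ?_, ?_, ?_⟩
  · have : (a' * a + b' * c) * (c' * b + d' * d) - (a' * b + b' * d) * (c' * a + d' * c) =
        (a' * d' - b' * c') * (a * d - b * c) := by ring
    rw [this]
    rcases hdet with h | h <;> rcases hdet' with h' | h' <;> rw [h, h'] <;> norm_num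
  · rw [key]
    exact mul_ne_zero hne' hne
  · rw [key]
    push_cast
    linear_combination (c * x + d) * hz + a' * hy

theorem unimodularRel_fract (x : ℝ) : UnimodularRel x (Int.fract x) :=
  ⟨1, -⌊x⌋, 0, 1, by norm_num, by norm_num, by
    push_cast
    linear_combination Int.floor_add_fract x⟩

theorem unimodularRel_gaussMap (x : ℝ) : UnimodularRel x (gaussMap x) := by
  by_cases hx : x = 0
  · subst hx
    simpa [gaussMap] using UnimodularRel.refl 0
  · refine ⟨-⌊x⁻¹⌋, 1, 1, 0, by norm_num, by simpa using hx, ?_⟩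
    have h := Int.floor_add_fract x⁻¹
    have h' := inv_mul_cancel₀ hx
    simp only [gaussMap]
    push_cast
    linear_combination x * h + h'

theorem unimodularRel_iterate_gaussMap (n : ℕ) (x : ℝ) :
    UnimodularRel x (gaussMap^[n] x) := by
  induction n with
  | zero => exact UnimodularRel.refl x
  | succ n ih =>
    rw [Function.iterate_succ_apply']
    exact ih.trans (unimodularRel_gaussMap _)

/-- The Gauss orbits of `x` and `y` merge. -/
def GaussMerge (x y : ℝ) : Prop :=
  ∃ k l : ℕ, gaussMap^[k] (Int.fract x) = gaussMap^[l] (Int.fract y)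

theorem GaussMerge.symm {x y : ℝ} (h : GaussMerge x y) : GaussMerge y x := by
  obtain ⟨k, l, h⟩ := h
  exact ⟨l, k, h.symm⟩

theorem GaussMerge.trans {x y z : ℝ} (h₁ : GaussMerge x y) (h₂ : GaussMerge y z) :
    GaussMerge x z := by
  obtain ⟨k, l, h⟩ := h₁
  obtain ⟨k', l', h'⟩ := h₂
  refine ⟨k' + k, l + l', ?_⟩
  rw [Function.iterate_add_apply, h, ← Function.iterate_add_apply, Nat.add_comm k' l,
    Function.iterate_add_apply, h', ← Function.iterate_add_apply]

theorem gaussMerge_of_fract_eq {x y : ℝ} (h : Int.fract x = Int.fract y) : GaussMerge x y :=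
  ⟨0, 0, h⟩

theorem fract_pos_of_irrational {x : ℝ} (hx : Irrational x) : 0 < Int.fract x := by
  refine lt_of_le_of_ne (Int.fract_nonneg x) fun h => ?_
  exact (hx.sub_intCast ⌊x⌋).ne_zero h.symm

theorem irrational_fract {x : ℝ} (hx : Irrational x) : Irrational (Int.fract x) :=
  hx.sub_intCast ⌊x⌋

theorem gaussMap_iterate_two_one_sub {t : ℝ} (h0 : 0 < t) (h1 : t < 1 / 2) :
    gaussMap (gaussMap (1 - t)) = gaussMap t := by
  have hpos : 0 < 1 - t := by linarith
  have h : gaussMap (1 - t) = t / (1 - t) := by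
    have : (1 - t)⁻¹ = t / (1 - t) + 1 := by field_simp; ring
    rw [gaussMap, this, Int.fract_add_one, Int.fract_eq_self]
    exact ⟨by positivity, by rw [div_lt_one hpos]; linarith⟩
  have h' : (t / (1 - t))⁻¹ = t⁻¹ - 1 := by field_simp
  rw [h, gaussMap, h', Int.fract_sub_one, gaussMap]

theorem gaussMerge_neg {x : ℝ} (hx : Irrational x) : GaussMerge x (-x) := by
  have hneg : Int.fract (-x) = 1 - Int.fract x :=
    Int.fract_neg (fract_pos_of_irrational hx).ne'
  have hirr := irrational_fract hx
  have hlt := Int.fract_lt_one x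
  have h0 := fract_pos_of_irrational hx
  have hhalf : Int.fract x ≠ 1 / 2 := fun h => hirr ⟨1 / 2, by rw [h]; norm_num⟩
  rcases lt_or_gt_of_ne hhalf with h | h
  · exact ⟨1, 2, by rw [hneg]; exact (gaussMap_iterate_two_one_sub h0 h).symm⟩
  · refine ⟨2, 1, ?_⟩
    rw [hneg]
    have := gaussMap_iterate_two_one_sub (t := 1 - Int.fract x) (by linarith) (by linarith)
    rwa [sub_sub_cancel] at this

theorem gaussMerge_inv_of_pos {x : ℝ} (hx : Irrational x) (h0 : 0 < x) :
    GaussMerge x x⁻¹ := by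
  have small : ∀ t : ℝ, 0 < t → t < 1 → GaussMerge t t⁻¹ := fun t ht ht1 =>
    ⟨1, 0, by simp [gaussMap, Int.fract_eq_self.2 ⟨ht.le, ht1⟩]⟩
  rcases lt_or_gt_of_ne hx.ne_one with h | h
  · exact small x h0 h
  · have := small x⁻¹ (inv_pos.2 h0) (inv_lt_one_of_one_lt₀ h)
    rw [inv_inv] at this
    exact this.symm

theorem gaussMerge_inv {x : ℝ} (hx : Irrational x) : GaussMerge x x⁻¹ := by
  rcases lt_or_gt_of_ne hx.ne_zero with h | h
  · have h₁ := gaussMerge_inv_of_pos hx.neg (neg_pos.2 h)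
    have h₂ := gaussMerge_neg hx.neg.inv
    rw [inv_neg, neg_neg] at h₂
    rw [inv_neg] at h₁
    exact ((gaussMerge_neg hx).trans h₁).trans h₂
  · exact gaussMerge_inv_of_pos hx h

/-- Unimodular Möbius transformations preserve irrationality and the tail of the Gauss orbit. -/
theorem gaussMerge_mobius {x : ℝ} (hx : Irrational x) (a b c d : ℤ)
    (hdet : a * d - b * c = 1 ∨ a * d - b * c = -1) :
    Irrational ((a * x + b) / (c * x + d) : ℝ) ∧ GaussMerge x ((a * x + b) / (c * x + d)) := by
  induction hn : c.natAbs using Nat.strong_induction_on generalizing a b c d with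
  | _ n ih =>
    by_cases hc : c = 0
    · subst hc
      have key : ∃ k : ℤ, ((a * x + b) / ((0 : ℤ) * x + d) : ℝ) = x + k ∨
          ((a * x + b) / ((0 : ℤ) * x + d) : ℝ) = -x + k := by
        have had : a * d = 1 ∨ a * d = -1 := by simpa using hdet
        have hd : d = 1 ∨ d = -1 := by
          apply Int.isUnit_iff.1
          rcases had with h | h
          · exact IsUnit.of_mul_eq_one a (by linarith)
          · exact IsUnit.of_mul_eq_one (-a) (by linarith)
        rcases hd with rfl | rfl
        · refine ⟨b, ?_⟩
          rcases had with h | h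
          · obtain rfl : a = 1 := by linarith
            left; push_cast; ring
          · obtain rfl : a = -1 := by linarith
            right; push_cast; ring
        · refine ⟨-b, ?_⟩
          rcases had with h | h
          · obtain rfl : a = -1 := by linarith
            left; push_cast; ring
          · obtain rfl : a = 1 := by linarith
            right; push_cast; ring
      obtain ⟨k, h | h⟩ := key
      · rw [h]
        exact ⟨hx.add_intCast k, gaussMerge_of_fract_eq (Int.fract_add_intCast x k).symm⟩
      · rw [h]
        exact ⟨hx.neg.add_intCast k, (gaussMerge_neg hx).trans
          (gaussMerge_of_fract_eq (Int.fract_add_intCast (-x) k).symm)⟩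
    · have hdm := Int.emod_add_mul_ediv a c
      obtain ⟨hw, hm⟩ := ih (a % c).natAbs
        (by
          have h1 := Int.emod_nonneg a hc
          have h2 := Int.emod_lt_abs a hc
          rw [Int.abs_eq_natAbs] at h2
          omega)
        c d (a % c) (b - (a / c) * d)
        (by
          have : c * (b - a / c * d) - d * (a % c) = -(a * d - b * c) := by
            linear_combination -d * hdm
          rw [this]
          omega) rfl
      set w : ℝ := (c * x + d) / (((a % c : ℤ) : ℝ) * x + ((b - (a / c) * d : ℤ) : ℝ)) with hwdef
      have hne : (c * x + d : ℝ) ≠ 0 := by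
        intro h
        apply hw.ne_zero
        rw [hwdef, h, zero_div]
      have hdm' : ((a % c : ℤ) : ℝ) + c * ((a / c : ℤ) : ℝ) = a := by exact_mod_cast hdm
      have hval : ((a * x + b) / (c * x + d) : ℝ) = w⁻¹ + ((a / c : ℤ) : ℝ) := by
        rw [hwdef, inv_div, div_add' _ _ _ hne, div_left_inj' hne]
        push_cast
        linear_combination -x * hdm'
      rw [hval]
      exact ⟨hw.inv.add_intCast _, (hm.trans (gaussMerge_inv hw)).trans
        (gaussMerge_of_fract_eq (Int.fract_add_intCast w⁻¹ _).symm)⟩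

theorem irrational_gaussMap_iterate {x : ℝ} (hx : Irrational x) (n : ℕ) :
    Irrational (gaussMap^[n] (Int.fract x)) ∧ 0 < gaussMap^[n] (Int.fract x) ∧
      gaussMap^[n] (Int.fract x) < 1 := by
  induction n with
  | zero => exact ⟨irrational_fract hx, fract_pos_of_irrational hx, Int.fract_lt_one x⟩
  | succ n ih =>
    rw [Function.iterate_succ_apply']
    exact ⟨irrational_fract ih.1.inv, fract_pos_of_irrational ih.1.inv, Int.fract_lt_one _⟩

theorem one_le_floor_inv_gaussMap_iterate {x : ℝ} (hx : Irrational x) (n : ℕ) :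
    1 ≤ ⌊(gaussMap^[n] (Int.fract x))⁻¹⌋ := by
  obtain ⟨-, h0, h1⟩ := irrational_gaussMap_iterate hx n
  rw [Int.le_floor, Int.cast_one]
  exact (one_lt_inv₀ h0).2 h1 |>.le

theorem pos_and_le_one_of_one_le_floor_inv {s : ℝ} (h : 1 ≤ ⌊s⁻¹⌋) : 0 < s ∧ s ≤ 1 := by
  rw [Int.le_floor, Int.cast_one] at h
  have hs : 0 < s := inv_pos.1 (by linarith)
  exact ⟨hs, (one_le_inv₀ hs).1 h⟩

theorem mul_floor_inv_add_gaussMap {s : ℝ} (hs : s ≠ 0) :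
    s * (⌊s⁻¹⌋ + gaussMap s) = 1 := by
  rw [gaussMap, Int.floor_add_fract, mul_inv_cancel₀ hs]

theorem mul_gaussMap_mem_Icc {s : ℝ} (h : 1 ≤ ⌊s⁻¹⌋) :
    0 ≤ s * gaussMap s ∧ s * gaussMap s ≤ 1 / 2 := by
  have hs := (pos_and_le_one_of_one_le_floor_inv h).1
  have h1 := mul_floor_inv_add_gaussMap hs.ne'
  have h2 : gaussMap s ≤ 1 := (Int.fract_lt_one _).le
  have h3 : (1 : ℝ) ≤ ⌊s⁻¹⌋ := by exact_mod_cast h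
  have h4 : s * gaussMap s ≤ s * ⌊s⁻¹⌋ := mul_le_mul_of_nonneg_left (h2.trans h3) hs.le
  exact ⟨mul_nonneg hs.le (Int.fract_nonneg _), by linarith⟩

theorem sub_eq_of_floor_inv_eq {s t : ℝ} (hs : s ≠ 0) (ht : t ≠ 0) (h : ⌊s⁻¹⌋ = ⌊t⁻¹⌋) :
    s - t = -(s * t * (gaussMap s - gaussMap t)) := by
  have h1 := mul_floor_inv_add_gaussMap hs
  have h2 := mul_floor_inv_add_gaussMap ht
  rw [← h] at h2
  linear_combination t * h1 - s * h2

theorem abs_sub_le_of_floor_inv_iterate_eq (n : ℕ) {s t : ℝ}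
    (h : ∀ i, ⌊(gaussMap^[i] s)⁻¹⌋ = ⌊(gaussMap^[i] t)⁻¹⌋)
    (hpos : ∀ i, 1 ≤ ⌊(gaussMap^[i] s)⁻¹⌋) : |s - t| ≤ (1 / 4) ^ n := by
  induction n generalizing s t with
  | zero =>
    obtain ⟨hs, hs1⟩ := pos_and_le_one_of_one_le_floor_inv (hpos 0)
    obtain ⟨ht, ht1⟩ := pos_and_le_one_of_one_le_floor_inv (h 0 ▸ hpos 0)
    simp only [Function.iterate_zero, id] at hs hs1 ht ht1
    rw [pow_zero, abs_le]
    constructor <;> linarith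
  | succ n ih =>
    have hpos' : ∀ i, 1 ≤ ⌊(gaussMap^[i] t)⁻¹⌋ := fun i => h i ▸ hpos i
    have hs := mul_gaussMap_mem_Icc (hpos 0)
    have ht := mul_gaussMap_mem_Icc (hpos' 0)
    have h0 := sub_eq_of_floor_inv_eq (pos_and_le_one_of_one_le_floor_inv (hpos 0)).1.ne'
      (pos_and_le_one_of_one_le_floor_inv (hpos' 0)).1.ne' (h 0)
    have h1 := sub_eq_of_floor_inv_eq (pos_and_le_one_of_one_le_floor_inv (hpos 1)).1.ne'
      (pos_and_le_one_of_one_le_floor_inv (hpos' 1)).1.ne' (h 1)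
    have hrec : |gaussMap (gaussMap s) - gaussMap (gaussMap t)| ≤ (1 / 4) ^ n :=
      ih (fun i => h (i + 2)) (fun i => hpos (i + 2))
    simp only [Function.iterate_zero, Function.iterate_one, id] at hs ht h0 h1
    have key : s - t = s * gaussMap s * (t * gaussMap t) *
        (gaussMap (gaussMap s) - gaussMap (gaussMap t)) := by
      linear_combination h0 - s * t * h1
    have hprod : s * gaussMap s * (t * gaussMap t) ≤ 1 / 4 := by
      have := mul_le_mul hs.2 ht.2 ht.1 (by norm_num)
      linarith
    rw [key, abs_mul, abs_of_nonneg (mul_nonneg hs.1 ht.1), pow_succ']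
    exact mul_le_mul hprod hrec (abs_nonneg _) (by norm_num)

/-- A continued fraction with positive digits determines its value. -/
theorem eq_of_floor_inv_iterate_eq {s t : ℝ}
    (h : ∀ i, ⌊(gaussMap^[i] s)⁻¹⌋ = ⌊(gaussMap^[i] t)⁻¹⌋)
    (hpos : ∀ i, 1 ≤ ⌊(gaussMap^[i] s)⁻¹⌋) : s = t := by
  have hlim : Filter.Tendsto (fun n : ℕ => (1 / 4 : ℝ) ^ n) Filter.atTop (nhds 0) :=
    tendsto_pow_atTop_nhds_zero_of_lt_one (by norm_num) (by norm_num)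
  have := ge_of_tendsto' hlim fun n => abs_sub_le_of_floor_inv_iterate_eq n h hpos
  exact sub_eq_zero.1 (abs_nonpos_iff.1 this)

theorem cfDigit_succ_add (k i : ℕ) (x : ℝ) :
    cfDigit (k + 1 + i) x = ⌊(gaussMap^[i] (gaussMap^[k] (Int.fract x)))⁻¹⌋ := by
  rw [cfDigit, show k + 1 + i - 1 = i + k by omega, Function.iterate_add_apply]

/-- for an irrational real `x`, the orbit of `x` under `PGL₂(ℤ)` acting by
Möbius transformations is exactly the set of reals whose continued fraction expansion has the
same tail as that of `x`. -/
theorem stmt_11 (x : ℝ) (hx : Irrational x) :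
    {y : ℝ | ∃ M : Matrix (Fin 2) (Fin 2) ℤ, (M.det = 1 ∨ M.det = -1) ∧
      y = ((M 0 0 : ℝ) * x + (M 0 1 : ℝ)) / ((M 1 0 : ℝ) * x + (M 1 1 : ℝ))}
    = {y : ℝ | ∃ m n : ℕ, 0 < m ∧ 0 < n ∧
      ∀ i : ℕ, cfDigit (n + i) y = cfDigit (m + i) x} := by
  ext y
  constructor
  · rintro ⟨M, hdet, rfl⟩
    rw [Matrix.det_fin_two] at hdet
    obtain ⟨k, l, hkl⟩ := (gaussMerge_mobius hx _ _ _ _ hdet).2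
    exact ⟨k + 1, l + 1, k.succ_pos, l.succ_pos, fun i => by
      rw [cfDigit_succ_add, cfDigit_succ_add, hkl]⟩
  · rintro ⟨m, n, hm, hn, h⟩
    obtain ⟨k, rfl⟩ : ∃ k, m = k + 1 := ⟨m - 1, by omega⟩
    obtain ⟨l, rfl⟩ : ∃ l, n = l + 1 := ⟨n - 1, by omega⟩
    simp only [cfDigit_succ_add] at h
    have heq : gaussMap^[k] (Int.fract x) = gaussMap^[l] (Int.fract y) :=
      eq_of_floor_inv_iterate_eq (fun i => (h i).symm) fun i => by
        rw [← Function.iterate_add_apply]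
        exact one_le_floor_inv_gaussMap_iterate hx _
    have hxk := (unimodularRel_fract x).trans (unimodularRel_iterate_gaussMap k _)
    have hyl := (unimodularRel_fract y).trans (unimodularRel_iterate_gaussMap l _)
    rw [heq] at hxk
    obtain ⟨a, b, c, d, hdet, hne, hy⟩ := hxk.trans hyl.symm
    refine ⟨!![a, b; c, d], by rwa [Matrix.det_fin_two_of], ?_⟩
    simpa using (eq_div_iff hne).2 hy
end
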